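/- arXiv:1010.2894 — 2 statements merged into one kernel-verified Lean document; each statement's English description precedes it below -/
import Mathlib

section
/- Let (E, ℰ) be a standard Borel (Lusin) space and let ν be a Markov kernel on E. Then there exist a measurable space (F′, 𝓕′), a probability measure μ′ on (F′, 𝓕′), and a BIJECTIVE measurable map T̃′ : E × F′ → E × F′ with measurable inverse, whose first component X′ : E × F′ → E satisfies: for every x ∈ E, the pushforward of μ′ under y ↦ X′(x, y) equals ν(x, ·). That is, every Markov kernel on a standard Borel space admits a dilation by an invertible dynamical system. -/
open MeasureTheory ProbabilityTheory

/-- The swapping involution: it exchanges `(x, inl y)` with `(f x y, inr (x, y))`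
and fixes everything else. -/
noncomputable def dilationSwap {E I : Type} (f : E → I → E) :
    E × (I ⊕ (E × I)) → E × (I ⊕ (E × I)) := by
  classical
  exact fun p => Sum.elim (fun q : E × I => (f q.1 q.2, Sum.inr (q.1, q.2)))
    (fun q : E × (E × I) => if q.1 = f q.2.1 q.2.2 then (q.2.1, Sum.inl q.2.2)
      else (q.1, Sum.inr q.2))
    (Equiv.prodSumDistrib E I (E × I) p)

lemma dilationSwap_involutive {E I : Type} (f : E → I → E) (p : E × (I ⊕ (E × I))) :
    dilationSwap f (dilationSwap f p) = p := by
  classical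
  rcases p with ⟨z, y | ⟨x, y⟩⟩
  · simp [dilationSwap]
  · by_cases h : z = f x y
    · simp [dilationSwap, h]
    · simp [dilationSwap, h]

lemma measurable_dilationSwap {E I : Type} [MeasurableSpace E] [StandardBorelSpace E]
    [MeasurableSpace I] (f : E → I → E) (hf : Measurable (Function.uncurry f)) :
    Measurable (dilationSwap f) := by
  classical
  have h2 : Measurable (fun q : E × (E × I) => f q.2.1 q.2.2) := hf.comp measurable_snd
  have hs : MeasurableSet {q : E × (E × I) | q.1 = f q.2.1 q.2.2} :=
    measurableSet_eq_fun measurable_fst h2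
  refine Measurable.comp (g := Sum.elim (fun q : E × I => (f q.1 q.2, Sum.inr (q.1, q.2)))
    (fun q : E × (E × I) => if q.1 = f q.2.1 q.2.2 then (q.2.1, Sum.inl q.2.2)
      else (q.1, Sum.inr q.2))) ?_ (MeasurableEquiv.prodSumDistrib E I (E × I)).measurable
  refine Measurable.sumElim ?_ ?_
  · exact hf.prodMk (measurable_inr.comp measurable_id)
  · exact Measurable.ite hs
      ((measurable_fst.comp measurable_snd).prodMk
        (measurable_inl.comp (measurable_snd.comp measurable_snd)))
      (measurable_fst.prodMk (measurable_inr.comp measurable_snd))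



/-- Every Markov kernel `ν` on a standard Borel (Lusin) space `E` admits a
dilation by an *invertible* dynamical system: there are a measurable space `F'`,
a probability measure `μ'` on `F'`, and a bijective measurable map
`T' : E × F' → E × F'` with measurable inverse, whose first component
`X'(x,y) = (T'(x,y)).1` satisfies `(X'(x, ·))_* μ' = ν(x, ·)` for all `x`. -/
theorem markov_kernel_invertible_dilation_exists
    {E : Type} [MeasurableSpace E] [StandardBorelSpace E]
    (ν : Kernel E E) [IsMarkovKernel ν] :
    ∃ (F' : Type) (_ : MeasurableSpace F') (μ' : Measure F'),
      IsProbabilityMeasure μ' ∧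
      ∃ (T' : E × F' → E × F') (S : E × F' → E × F'),
        Measurable T' ∧ Measurable S ∧
        Function.LeftInverse S T' ∧ Function.RightInverse S T' ∧
        (∀ x : E, Measure.map (fun y => (T' (x, y)).1) μ' = ν x) := by
  rcases isEmpty_or_nonempty E with hE | hE
  · exact ⟨Unit, inferInstance, Measure.dirac (), inferInstance, id, id, measurable_id,
      measurable_id, fun _ => rfl, fun _ => rfl, fun x => hE.elim x⟩
  obtain ⟨f, hf, hmap⟩ := Kernel.exists_measurable_map_eq_unitInterval ν
  have hT := measurable_dilationSwap f hf
  refine ⟨unitInterval ⊕ (E × unitInterval), inferInstance,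
    Measure.map Sum.inl (volume : Measure unitInterval),
    Measure.isProbabilityMeasure_map measurable_inl.aemeasurable,
    dilationSwap f, dilationSwap f, hT, hT,
    dilationSwap_involutive f, dilationSwap_involutive f, fun x => ?_⟩
  have hx : Measurable (fun y => (dilationSwap f (x, y)).1) :=
    measurable_fst.comp (hT.comp measurable_prodMk_left)
  rw [Measure.map_map hx measurable_inl]
  exact hmap x
end

section
/- Let (E, ℰ) be a standard Borel (Lusin) space and let ν be a Markov kernel on E whose Markov operator L is invertible in the category of Markov operators; that is, there exists a Markov kernel μ with Markov operator M such that M ∘ L = L ∘ M = identity on bounded measurable functions (equivalently, the kernel compositions ν ∘ μ and μ ∘ ν both equal the identity kernel x ↦ δ_x). Then ν is deterministic: for every x ∈ E, ν(x, ·) is a Dirac mass δ_{T̃(x)} for some measurable map T̃ : E → E. -/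
open MeasureTheory ProbabilityTheory

/-- If a Markov kernel `ν` on a standard Borel (Lusin) space is invertible in
the category of Markov operators — that is, there is a Markov kernel `μ` whose
compositions with `ν` in both orders are the identity kernel `x ↦ δ_x` — then
`ν` is deterministic: `ν(x,·) = δ_{T̃(x)}` for some measurable `T̃ : E → E`. -/
theorem invertible_markov_kernel_is_deterministic
    {E : Type*} [MeasurableSpace E] [StandardBorelSpace E]
    (ν μ : Kernel E E) [IsMarkovKernel ν] [IsMarkovKernel μ]
    (hμν : μ ∘ₖ ν = Kernel.id) (hνμ : ν ∘ₖ μ = Kernel.id) :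
    ∃ T' : E → E, Measurable T' ∧ ∀ x : E, ν x = Measure.dirac (T' x) := by
  have key : ∀ x, ∃ y, ν x = Measure.dirac y := by
    intro x
    have h0 : (μ ∘ₖ ν) x {x}ᶜ = 0 := by
      rw [hμν, Kernel.id_apply, Measure.dirac_apply' _ (measurableSet_singleton x).compl]
      simp
    have h1 := Kernel.ae_null_of_comp_null h0
    obtain ⟨y, hy⟩ := h1.exists
    refine ⟨y, ?_⟩
    have hae : ∀ᵐ z ∂(μ y), z = x := by
      rw [ae_iff]
      exact hy
    ext A hA
    have h2 : (ν ∘ₖ μ) y A = ν x A := by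
      rw [Kernel.comp_apply' _ _ _ hA]
      calc ∫⁻ z, ν z A ∂(μ y) = ∫⁻ _, ν x A ∂(μ y) := by
            apply lintegral_congr_ae
            filter_upwards [hae] with z hz
            rw [hz]
        _ = ν x A := by simp
    rw [← h2, hνμ, Kernel.id_apply]
  choose T hT using key
  refine ⟨T, ?_, hT⟩
  intro A hA
  have h3 : T ⁻¹' A = (fun x => ν x A) ⁻¹' {1} := by
    ext x
    by_cases h : T x ∈ A <;> simp [hT x, Measure.dirac_apply' _ hA, h]
  rw [h3]
  exact Kernel.measurable_coe ν hA (measurableSet_singleton 1)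
end
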